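/- Let Q and Y be jointly distributed random variables on finite types with joint pmf p, let f : Y → X be a function into a finite type, and let X = f(Y) be the induced random variable (so the joint pmf of (Q, X, Y) is supported on triples (q, f(y), y)). If the conditional mutual information I(Q:Y|X) = 0, then for any two states y₁, y₂ with p_Y(y₁) > 0, p_Y(y₂) > 0 and f(y₁) = f(y₂), the conditional distributions of Q agree: p(q|y₁) = p(q|y₂) for every q. -/

import Mathlib

open Real Finset

/- STATEMENT 8: Let `(Q, Y)` have joint pmf `p`, let `X = f(Y)`, and let
`r(q,x,y) = p(q,y)` if `x = f y` and `0` otherwise be the induced joint pmf of `(Q,X,Y)`.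
If `I(Q:Y|X) = 0`, then for any `y₁, y₂` with positive probability and `f y₁ = f y₂`,
the conditional distributions `p(·|y₁)` and `p(·|y₂)` of `Q` agree. -/

section Defs

variable {Q Y X : Type*} [Fintype Q] [Fintype Y] [Fintype X] [DecidableEq X]

/-- Induced joint pmf of `(Q, X, Y)` where `X = f(Y)`. -/
noncomputable def ind (p : Q × Y → ℝ) (f : Y → X) : Q × X × Y → ℝ :=
  fun a => if a.2.1 = f a.2.2 then p (a.1, a.2.2) else 0

/-- Marginal of `X` under the induced pmf. -/
noncomputable def indX (p : Q × Y → ℝ) (f : Y → X) (x : X) : ℝ :=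
  ∑ q, ∑ y, ind p f (q, x, y)

/-- Marginal of `(Q, X)` under the induced pmf. -/
noncomputable def indQX (p : Q × Y → ℝ) (f : Y → X) (q : Q) (x : X) : ℝ :=
  ∑ y, ind p f (q, x, y)

/-- Marginal of `(X, Y)` under the induced pmf. -/
noncomputable def indXY (p : Q × Y → ℝ) (f : Y → X) (x : X) (y : Y) : ℝ :=
  ∑ q, ind p f (q, x, y)

/-- Marginal of `Y`. -/
noncomputable def margY (p : Q × Y → ℝ) (y : Y) : ℝ :=
  ∑ q, p (q, y)

/-- Conditional mutual information `I(Q:Y|X)` for `X = f(Y)`. -/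
noncomputable def condMI (p : Q × Y → ℝ) (f : Y → X) : ℝ :=
  ∑ q, ∑ x, ∑ y,
    ind p f (q, x, y) *
      logb 2 (ind p f (q, x, y) * indX p f x / (indQX p f q x * indXY p f x y))

end Defs

/-! Conditional mutual information is the relative entropy of the joint law `r` of `(Q, X, Y)`
with respect to the law `r_{QX} r_{XY} / r_X`, which has the same total mass as `r`. By the
equality case of Gibbs' inequality its vanishing forces `r = r_{QX} r_{XY} / r_X`. At `x = f y`
this says that `p(q|y)` equals `r_{QX}(q, f y) / r_X(f y)`, which depends on `y` only through
`f y`. -/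

section Gibbs

open InformationTheory

theorem mul_klFun_div {a b : ℝ} (hab : b = 0 → a = 0) :
    b * klFun (a / b) = a * log (a / b) + b - a := by
  rcases eq_or_ne b 0 with rfl | hb
  · simp [hab rfl]
  · simp only [klFun]
    field_simp

theorem eq_of_mul_klFun_div_eq_zero {a b : ℝ} (ha : 0 ≤ a) (hb : 0 ≤ b) (hab : b = 0 → a = 0)
    (h : b * klFun (a / b) = 0) : a = b := by
  rcases mul_eq_zero.mp h with hb_zero | hkl
  · rw [hab hb_zero, hb_zero]
  · exact eq_of_div_eq_one ((klFun_eq_zero_iff (div_nonneg ha hb)).mp hkl)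

theorem eq_of_sum_mul_log_div_nonpos {ι : Type*} {s : Finset ι} {P R : ι → ℝ}
    (hP : ∀ i ∈ s, 0 ≤ P i) (hR : ∀ i ∈ s, 0 ≤ R i) (hac : ∀ i ∈ s, R i = 0 → P i = 0)
    (hmass : ∑ i ∈ s, R i ≤ ∑ i ∈ s, P i) (hkl : ∑ i ∈ s, P i * log (P i / R i) ≤ 0) :
    ∀ i ∈ s, P i = R i := by
  have hterm_nonneg : ∀ i ∈ s, 0 ≤ R i * klFun (P i / R i) := fun i hi =>
    mul_nonneg (hR i hi) (klFun_nonneg (div_nonneg (hP i hi) (hR i hi)))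
  have hsum_nonpos : ∑ i ∈ s, R i * klFun (P i / R i) ≤ 0 := by
    rw [sum_congr rfl fun i hi => mul_klFun_div (hac i hi), sum_sub_distrib, sum_add_distrib]
    linarith
  have hterm_zero := (sum_eq_zero_iff_of_nonneg hterm_nonneg).mp
    (hsum_nonpos.antisymm (sum_nonneg hterm_nonneg))
  exact fun i hi => eq_of_mul_klFun_div_eq_zero (hP i hi) (hR i hi) (hac i hi) (hterm_zero i hi)

end Gibbs

section CondIndep

variable {α β γ : Type*} [Fintype α] [Fintype γ]

/-- The conditionally independent coupling `r₁₂ r₂₃ / r₂` built from the marginals of a weight `r`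
on `α × β × γ`: the reference weight relative to which the entropy of `r` is the conditional mutual
information. Where `r₂` vanishes the quotient is `0`, as intended for nonnegative `r`. -/
noncomputable def condIndepCoupling (r : α × β × γ → ℝ) : α × β × γ → ℝ :=
  fun a => (∑ z, r (a.1, a.2.1, z)) * (∑ x, r (x, a.2.1, a.2.2)) / ∑ x, ∑ z, r (x, a.2.1, z)

theorem condIndepCoupling_nonneg {r : α × β × γ → ℝ} (hr : ∀ a, 0 ≤ r a) (a : α × β × γ) :
    0 ≤ condIndepCoupling r a :=
  div_nonneg (mul_nonneg (sum_nonneg fun _ _ => hr _) (sum_nonneg fun _ _ => hr _))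
    (sum_nonneg fun _ _ => sum_nonneg fun _ _ => hr _)

theorem eq_zero_of_condIndepCoupling_eq_zero {r : α × β × γ → ℝ} (hr : ∀ a, 0 ≤ r a)
    {a : α × β × γ} (ha : condIndepCoupling r a = 0) : r a = 0 := by
  obtain ⟨x, y, z⟩ := a
  have h12 : r (x, y, z) ≤ ∑ z', r (x, y, z') :=
    single_le_sum (f := fun z' => r (x, y, z')) (fun _ _ => hr _) (mem_univ z)
  have h23 : r (x, y, z) ≤ ∑ x', r (x', y, z) :=
    single_le_sum (f := fun x' => r (x', y, z)) (fun _ _ => hr _) (mem_univ x)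
  have h2 : ∑ z', r (x, y, z') ≤ ∑ x', ∑ z', r (x', y, z') :=
    single_le_sum (f := fun x' => ∑ z', r (x', y, z')) (fun _ _ => sum_nonneg fun _ _ => hr _)
      (mem_univ x)
  by_contra hne
  have hpos : 0 < r (x, y, z) := (hr _).lt_of_ne' hne
  exact (div_pos (mul_pos (hpos.trans_le h12) (hpos.trans_le h23))
    (hpos.trans_le (h12.trans h2))).ne' ha

variable [Fintype β]

theorem sum_condIndepCoupling (r : α × β × γ → ℝ) : ∑ a, condIndepCoupling r a = ∑ a, r a := by
  have hfiber (y : β) :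
      ∑ x, ∑ z, condIndepCoupling r (x, y, z) = ∑ x, ∑ z, r (x, y, z) := by
    simp only [condIndepCoupling, ← sum_div, ← mul_sum, ← sum_mul]
    rw [sum_comm (f := fun z x => r (x, y, z)), mul_self_div_self]
  simp only [Fintype.sum_prod_type]
  rw [sum_comm, sum_comm (f := fun x y => ∑ z, r (x, y, z))]
  exact sum_congr rfl fun y _ => hfiber y

theorem eq_condIndepCoupling_of_sum_mul_log_div_nonpos {r : α × β × γ → ℝ} (hr : ∀ a, 0 ≤ r a)
    (hkl : ∑ a, r a * log (r a / condIndepCoupling r a) ≤ 0) : r = condIndepCoupling r :=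
  funext fun a => eq_of_sum_mul_log_div_nonpos (fun a _ => hr a)
    (fun a _ => condIndepCoupling_nonneg hr a)
    (fun _ _ => eq_zero_of_condIndepCoupling_eq_zero hr) (sum_condIndepCoupling r).le hkl
    a (mem_univ a)

end CondIndep

section Induced

variable {Q Y X : Type*} [DecidableEq X]

theorem ind_nonneg {p : Q × Y → ℝ} (hp : ∀ a, 0 ≤ p a) (f : Y → X) (a : Q × X × Y) :
    0 ≤ ind p f a :=
  ite_nonneg (hp _) le_rfl

theorem ind_apply_self (p : Q × Y → ℝ) (f : Y → X) (q : Q) (y : Y) :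
    ind p f (q, f y, y) = p (q, y) :=
  if_pos rfl

variable [Fintype Q]

theorem indXY_apply_self (p : Q × Y → ℝ) (f : Y → X) (y : Y) :
    indXY p f (f y) y = margY p y :=
  sum_congr rfl fun q _ => ind_apply_self p f q y

variable [Fintype Y]

theorem condIndepCoupling_ind (p : Q × Y → ℝ) (f : Y → X) (q : Q) (x : X) (y : Y) :
    condIndepCoupling (ind p f) (q, x, y) = indQX p f q x * indXY p f x y / indX p f x :=
  rfl

variable [Fintype X]

theorem condMI_eq_sum_mul_log_div (p : Q × Y → ℝ) (f : Y → X) :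
    condMI p f =
      (∑ a, ind p f a * log (ind p f a / condIndepCoupling (ind p f) a)) / log 2 := by
  simp only [condMI, logb, Fintype.sum_prod_type, condIndepCoupling_ind, div_div_eq_mul_div,
    sum_div, ← mul_div_assoc]

theorem ind_eq_condIndepCoupling_of_condMI_eq_zero {p : Q × Y → ℝ} (hp : ∀ a, 0 ≤ p a)
    {f : Y → X} (h : condMI p f = 0) : ind p f = condIndepCoupling (ind p f) := by
  have hlog2 : log 2 ≠ 0 := (log_pos one_lt_two).ne'
  rw [condMI_eq_sum_mul_log_div, div_eq_zero_iff, or_iff_left hlog2] at h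
  exact eq_condIndepCoupling_of_sum_mul_log_div_nonpos (ind_nonneg hp f) h.le

theorem div_margY_eq_indQX_div_indX {p : Q × Y → ℝ} (hp : ∀ a, 0 ≤ p a) {f : Y → X}
    (h : condMI p f = 0) {y : Y} (hy : margY p y ≠ 0) (q : Q) :
    p (q, y) / margY p y = indQX p f q (f y) / indX p f (f y) := by
  have hpq : p (q, y) = indQX p f q (f y) * margY p y / indX p f (f y) := by
    rw [← ind_apply_self p f, ind_eq_condIndepCoupling_of_condMI_eq_zero hp h,
      condIndepCoupling_ind, indXY_apply_self]
  rw [hpq, div_right_comm, mul_div_cancel_right₀ _ hy]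

end Induced

theorem stmt_8 {Q Y X : Type*} [Fintype Q] [Fintype Y] [Fintype X] [DecidableEq X]
    (p : Q × Y → ℝ) (f : Y → X)
    (hnn : ∀ a, 0 ≤ p a)
    (hsum : ∑ a, p a = 1)
    (hcmi : condMI p f = 0) :
    ∀ y₁ y₂ : Y, 0 < margY p y₁ → 0 < margY p y₂ → f y₁ = f y₂ →
      ∀ q : Q, p (q, y₁) / margY p y₁ = p (q, y₂) / margY p y₂ := by
  intro y₁ y₂ hy₁ hy₂ hf q
  rw [div_margY_eq_indQX_div_indX hnn hcmi hy₁.ne', div_margY_eq_indQX_div_indX hnn hcmi hy₂.ne',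
    hf]
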